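/- Let Λ be a symmetric positive definite k×k matrix, l > 0, r, k ≥ 1, and let C = I_r ⊗ Λ (the rk×rk block-diagonal matrix with r diagonal blocks equal to Λ). Let h : ℝ^{rk} → ℝ be C^∞ with compact support. For each integer d ≥ 2 let Z_d ~ N(0, l²C/(d−1)). Then lim_{d→∞} sup_{x ∈ ℝ^{rk}} | k·d·E[ h(x + Z_d) − h(x) ] − (k·l²/2)·Tr( C·∇²h(x) ) | = 0, where ∇²h(x) is the Hessian matrix of h at x. -/

import Mathlib

open MeasureTheory ProbabilityTheory Filter
open scoped RealInnerProductSpace Kronecker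

/-!
The idea is a second-order Taylor expansion under the integral. A bounded, uniformly continuous
Hessian satisfies `‖D²h(y) - D²h(x)‖ ≤ ε + L‖y - x‖` for every `ε > 0`, with `L` depending only on
`ε`, so the Taylor remainder at an increment `z` is at most `ε‖z‖² + L‖z‖³`, uniformly in the base
point. Now `Z_d` has the law of `s_d Y` with `Y ~ N(0, C)` and `s_d = l / √(d - 1)`: the linear term
averages to zero because `Y` is centered, the quadratic term averages to `(s_d² / 2) Tr(C ∇²h(x))`,
and the remainder averages to at most `s_d² (ε E‖Y‖² + L s_d E‖Y‖³)`. Multiplying by `k d`, where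
`k d s_d² → k l²` and `s_d → 0`, leaves an error of order `ε`.
-/

open scoped Topology

lemma exists_dist_le_add_mul_dist {X Y : Type*} [PseudoMetricSpace X] [PseudoMetricSpace Y]
    {f : X → Y} (huc : UniformContinuous f) (hbdd : Bornology.IsBounded (Set.range f))
    {ε : ℝ} (hε : 0 < ε) :
    ∃ L : ℝ, 0 ≤ L ∧ ∀ x y, dist (f x) (f y) ≤ ε + L * dist x y := by
  obtain ⟨δ, hδ, hclose⟩ := Metric.uniformContinuous_iff.mp huc ε hε
  refine ⟨Metric.diam (Set.range f) / δ, by positivity, fun x y => ?_⟩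
  obtain hlt | hge := lt_or_ge (dist x y) δ
  · exact (hclose hlt).le.trans (le_add_of_nonneg_right (by positivity))
  · calc dist (f x) (f y) ≤ Metric.diam (Set.range f) :=
          Metric.dist_le_diam_of_mem hbdd ⟨x, rfl⟩ ⟨y, rfl⟩
      _ = Metric.diam (Set.range f) / δ * δ := by field_simp
      _ ≤ Metric.diam (Set.range f) / δ * dist x y := by gcongr
      _ ≤ ε + Metric.diam (Set.range f) / δ * dist x y := le_add_of_nonneg_left hε.le

lemma tendsto_iSup_dist_of_tendstoUniformly {ι X Y : Type*} [PseudoMetricSpace Y]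
    {F : ι → X → Y} {G : X → Y} {p : Filter ι} (hF : TendstoUniformly F G p) :
    Tendsto (fun i => ⨆ x, dist (F i x) (G x)) p (𝓝 0) := by
  refine Metric.tendsto_nhds.mpr fun ε hε => ?_
  filter_upwards [Metric.tendstoUniformly_iff.mp hF (ε / 2) (half_pos hε)] with i hi
  have hle : ⨆ x, dist (F i x) (G x) ≤ ε / 2 :=
    Real.iSup_le (fun x => (dist_comm _ _).trans_le (hi x).le) (half_pos hε).le
  rw [Real.dist_0_eq_abs, abs_of_nonneg (Real.iSup_nonneg fun x => dist_nonneg)]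
  linarith

lemma tendstoUniformly_smul_of_norm_le {ι X F : Type*} [NormedAddCommGroup F] [NormedSpace ℝ F]
    {p : Filter ι} {a : ι → ℝ} {c K : ℝ} {g : X → F} (ha : Tendsto a p (𝓝 c))
    (hg : ∀ x, ‖g x‖ ≤ K) :
    TendstoUniformly (fun i x => a i • g x) (fun x => c • g x) p := by
  have hzero : Tendsto (fun i => ‖c - a i‖ * K) p (𝓝 0) := by
    simpa using ((ha.const_sub c).norm.mul_const K)
  refine Metric.tendstoUniformly_iff.mpr fun ε hε => ?_
  filter_upwards [hzero.eventually_lt_const hε] with i hi x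
  rw [dist_eq_norm, ← sub_smul, norm_smul]
  exact (mul_le_mul_of_nonneg_left (hg x) (norm_nonneg _)).trans_lt hi

section Taylor

variable {E F : Type*} [NormedAddCommGroup E] [NormedSpace ℝ E]
  [NormedAddCommGroup F] [NormedSpace ℝ F] {f : E → F}

/-- The remainder of the second-order Taylor expansion of `f` at `x`, as a function of the
increment `z`. -/
noncomputable def taylorRemainderTwo (f : E → F) (x z : E) : F :=
  f (x + z) - f x - fderiv ℝ f x z - (2 : ℝ)⁻¹ • fderiv ℝ (fderiv ℝ f) x z z

lemma continuous_taylorRemainderTwo (hf : Continuous f) (x : E) :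
    Continuous (taylorRemainderTwo f x) := by
  unfold taylorRemainderTwo
  fun_prop

lemma fderiv_fderiv_apply_const (hf : ContDiff ℝ 2 f) (x v w : E) :
    fderiv ℝ (fun y => fderiv ℝ f y v) x w = fderiv ℝ (fderiv ℝ f) x w v := by
  have hdf : DifferentiableAt ℝ (fderiv ℝ f) x :=
    (hf.fderiv_right (m := 1) (by norm_num)).differentiable (by simp) x
  simp [fderiv_clm_apply hdf (differentiableAt_const v)]

lemma hasFDerivAt_taylorRemainderTwo (hf : ContDiff ℝ 2 f) (x z : E) :
    HasFDerivAt (taylorRemainderTwo f x)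
      (fderiv ℝ f (x + z) - fderiv ℝ f x - fderiv ℝ (fderiv ℝ f) x z) z := by
  have hshift : HasFDerivAt (fun w => f (x + w)) (fderiv ℝ f (x + z)) z :=
    (hasFDerivAt_comp_add_left x).mpr (hf.differentiable (by simp) (x + z)).hasFDerivAt
  have hquad := ((fderiv ℝ (fderiv ℝ f) x).hasFDerivAt_of_bilinear
    (hasFDerivAt_id z) (hasFDerivAt_id z)).const_smul (2 : ℝ)⁻¹
  refine (((hshift.sub_const (f x)).sub (fderiv ℝ f x).hasFDerivAt).sub hquad).congr_fderiv ?_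
  ext v
  have hsymm : fderiv ℝ (fderiv ℝ f) x v z = fderiv ℝ (fderiv ℝ f) x z v :=
    (hf.contDiffAt.isSymmSndFDerivAt (by simp)).eq v z
  simp [hsymm, ← two_smul ℝ]

lemma norm_taylorRemainderTwo_le (hf : ContDiff ℝ 2 f) {x z : E} {c : ℝ}
    (hc : ∀ y ∈ Metric.closedBall x ‖z‖,
      dist (fderiv ℝ (fderiv ℝ f) y) (fderiv ℝ (fderiv ℝ f) x) ≤ c) :
    ‖taylorRemainderTwo f x z‖ ≤ c * ‖z‖ ^ 2 := by
  have hdf : Differentiable ℝ (fderiv ℝ f) :=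
    (hf.fderiv_right (m := 1) (by norm_num)).differentiable (by simp)
  have hc_nonneg : 0 ≤ c := dist_nonneg.trans (hc x (by simp))
  have hderiv : ∀ w ∈ Metric.closedBall 0 ‖z‖,
      ‖fderiv ℝ f (x + w) - fderiv ℝ f x - fderiv ℝ (fderiv ℝ f) x w‖ ≤ c * ‖z‖ := by
    intro w hw
    have hmvt := (convex_closedBall x ‖z‖).norm_image_sub_le_of_norm_fderiv_le'
      (fun y _ => hdf y) (fun y hy => (dist_eq_norm _ _).symm.trans_le (hc y hy))
      (Metric.mem_closedBall_self (norm_nonneg z))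
      (show x + w ∈ Metric.closedBall x ‖z‖ by simpa using hw)
    rw [add_sub_cancel_left] at hmvt
    exact hmvt.trans (by gcongr; simpa using hw)
  have hmvt := (convex_closedBall (0 : E) ‖z‖).norm_image_sub_le_of_norm_hasFDerivWithin_le
    (fun w _ => (hasFDerivAt_taylorRemainderTwo hf x w).hasFDerivWithinAt) hderiv
    (Metric.mem_closedBall_self (norm_nonneg z)) (show z ∈ Metric.closedBall 0 ‖z‖ by simp)
  simpa [taylorRemainderTwo, sq, mul_assoc] using hmvt

lemma norm_taylorRemainderTwo_le_of_forall_dist_le (hf : ContDiff ℝ 2 f) {x : E} {ε L : ℝ}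
    (hL : 0 ≤ L)
    (hmod : ∀ y, dist (fderiv ℝ (fderiv ℝ f) y) (fderiv ℝ (fderiv ℝ f) x) ≤ ε + L * dist y x)
    (z : E) :
    ‖taylorRemainderTwo f x z‖ ≤ ε * ‖z‖ ^ 2 + L * ‖z‖ ^ 3 := by
  refine (norm_taylorRemainderTwo_le hf (c := ε + L * ‖z‖) fun y hy => (hmod y).trans ?_).trans_eq
    (by ring)
  gcongr
  exact hy

end Taylor

section Averaging

variable {E F : Type*} [NormedAddCommGroup E] [NormedSpace ℝ E] [MeasurableSpace E]
  [NormedAddCommGroup F] [NormedSpace ℝ F]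
  {f : E → F} {ν : Measure E}

lemma norm_integral_bilin_self_le (hν : MemLp id 2 ν) (B : E →L[ℝ] E →L[ℝ] F) :
    ‖∫ y, B y y ∂ν‖ ≤ ‖B‖ * ∫ y, ‖y‖ ^ 2 ∂ν := by
  rw [← integral_const_mul]
  refine norm_integral_le_of_norm_le ((hν.integrable_norm_pow (by simp)).const_mul ‖B‖)
    (.of_forall fun y => ?_)
  simpa [sq, mul_assoc] using B.le_opNorm₂ y y

lemma norm_integral_taylorRemainderTwo_smul_le [IsFiniteMeasure ν] (hf : ContDiff ℝ 2 f)
    (hν : MemLp id 3 ν) {x : E} {ε L : ℝ} (hL : 0 ≤ L)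
    (hmod : ∀ y, dist (fderiv ℝ (fderiv ℝ f) y) (fderiv ℝ (fderiv ℝ f) x) ≤ ε + L * dist y x)
    (s : ℝ) :
    ‖∫ y, taylorRemainderTwo f x (s • y) ∂ν‖ ≤
      s ^ 2 * (ε * ∫ y, ‖y‖ ^ 2 ∂ν + L * |s| * ∫ y, ‖y‖ ^ 3 ∂ν) := by
  have hsq : Integrable (fun y => ε * ‖y‖ ^ 2) ν :=
    ((hν.mono_exponent (by norm_num)).integrable_norm_pow (p := 2) (by simp)).const_mul _
  have hcube : Integrable (fun y => L * |s| * ‖y‖ ^ 3) ν :=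
    (hν.integrable_norm_pow (p := 3) (by simp)).const_mul _
  calc ‖∫ y, taylorRemainderTwo f x (s • y) ∂ν‖
      ≤ ∫ y, s ^ 2 * (ε * ‖y‖ ^ 2 + L * |s| * ‖y‖ ^ 3) ∂ν := by
        refine norm_integral_le_of_norm_le ((hsq.add hcube).const_mul _) (.of_forall fun y => ?_)
        refine (norm_taylorRemainderTwo_le_of_forall_dist_le hf hL hmod (s • y)).trans_eq ?_
        rw [norm_smul, Real.norm_eq_abs, ← sq_abs s]
        ring
    _ = s ^ 2 * (ε * ∫ y, ‖y‖ ^ 2 ∂ν + L * |s| * ∫ y, ‖y‖ ^ 3 ∂ν) := by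
        rw [integral_const_mul, integral_add hsq hcube, integral_const_mul, integral_const_mul]

lemma tendstoUniformly_smul_integral_taylorRemainderTwo [IsFiniteMeasure ν] (hf : ContDiff ℝ 2 f)
    (hbdd : Bornology.IsBounded (Set.range (fderiv ℝ (fderiv ℝ f))))
    (huc : UniformContinuous (fderiv ℝ (fderiv ℝ f))) (hν : MemLp id 3 ν)
    {ι : Type*} {p : Filter ι} {a s : ι → ℝ} {c : ℝ} (hs : Tendsto s p (𝓝 0))
    (has : Tendsto (fun i => a i * s i ^ 2) p (𝓝 c)) :
    TendstoUniformly (fun i x => a i • ∫ y, taylorRemainderTwo f x (s i • y) ∂ν) 0 p := by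
  refine Metric.tendstoUniformly_iff.mpr fun η hη => ?_
  set m₂ := ∫ y, ‖y‖ ^ 2 ∂ν
  set m₃ := ∫ y, ‖y‖ ^ 3 ∂ν
  obtain ⟨ε, hε, hεη⟩ : ∃ ε > 0, |c| * m₂ * ε < η := exists_pos_mul_lt hη _
  obtain ⟨L, hL, hmod⟩ := exists_dist_le_add_mul_dist huc hbdd hε
  have hlim : Tendsto (fun i => |a i * s i ^ 2| * (ε * m₂ + L * |s i| * m₃)) p
      (𝓝 (|c| * m₂ * ε)) := by
    convert has.abs.mul (((hs.abs.const_mul L).mul_const m₃).const_add (ε * m₂)) using 2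
    simp only [abs_zero, mul_zero, zero_mul, add_zero]
    ring
  filter_upwards [hlim.eventually_lt_const hεη] with i hi x
  rw [Pi.zero_apply, dist_zero_left, norm_smul]
  refine lt_of_le_of_lt ?_ hi
  calc ‖a i‖ * ‖∫ y, taylorRemainderTwo f x (s i • y) ∂ν‖
      ≤ ‖a i‖ * (s i ^ 2 * (ε * m₂ + L * |s i| * m₃)) := by
        gcongr
        exact norm_integral_taylorRemainderTwo_smul_le hf hν hL (fun y => hmod y x) (s i)
    _ = |a i * s i ^ 2| * (ε * m₂ + L * |s i| * m₃) := by
        rw [abs_mul, abs_sq, Real.norm_eq_abs]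
        ring

variable [BorelSpace E] [SecondCountableTopology E]

lemma integrable_bilin_self (hν : MemLp id 2 ν) (B : E →L[ℝ] E →L[ℝ] F) :
    Integrable (fun y => B y y) ν := by
  refine ((hν.integrable_norm_pow (by simp)).const_mul ‖B‖).mono'
    (Continuous.aestronglyMeasurable (by fun_prop)) (.of_forall fun y => ?_)
  simpa [sq, mul_assoc] using B.le_opNorm₂ y y

lemma integrable_taylorRemainderTwo_smul (hf : ContDiff ℝ 2 f)
    (hbdd : Bornology.IsBounded (Set.range (fderiv ℝ (fderiv ℝ f)))) (hν : MemLp id 2 ν)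
    (x : E) (s : ℝ) :
    Integrable (fun y => taylorRemainderTwo f x (s • y)) ν := by
  have hdom : Integrable
      (fun y => Metric.diam (Set.range (fderiv ℝ (fderiv ℝ f))) * ‖s • y‖ ^ 2) ν :=
    ((hν.const_smul s).integrable_norm_pow (by simp)).const_mul _
  refine hdom.mono' (Continuous.aestronglyMeasurable ?_) (.of_forall fun y => ?_)
  · exact (continuous_taylorRemainderTwo hf.continuous x).comp (continuous_const_smul s)
  · exact norm_taylorRemainderTwo_le hf fun w _ =>
      Metric.dist_le_diam_of_mem hbdd ⟨w, rfl⟩ ⟨x, rfl⟩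

lemma integral_increment_eq_add_integral_taylorRemainderTwo [CompleteSpace E] [CompleteSpace F]
    [IsFiniteMeasure ν] (hf : ContDiff ℝ 2 f)
    (hbdd : Bornology.IsBounded (Set.range (fderiv ℝ (fderiv ℝ f)))) (hν : MemLp id 2 ν)
    (hmean : ∫ y, y ∂ν = 0) (x : E) (s : ℝ) :
    ∫ y, (f (x + s • y) - f x) ∂ν = (s ^ 2 / 2) • ∫ y, fderiv ℝ (fderiv ℝ f) x y y ∂ν
      + ∫ y, taylorRemainderTwo f x (s • y) ∂ν := by
  have hid : Integrable (fun y => y) ν := hν.integrable (by norm_num)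
  have hlin : Integrable (fun y => s • fderiv ℝ f x y) ν :=
    ((fderiv ℝ f x).integrable_comp hid).smul s
  have hquad : Integrable (fun y => (s ^ 2 / 2) • fderiv ℝ (fderiv ℝ f) x y y) ν :=
    (integrable_bilin_self hν _).smul _
  have hlin_zero : ∫ y, s • fderiv ℝ f x y ∂ν = 0 := by
    rw [integral_smul, ContinuousLinearMap.integral_comp_comm _ hid, hmean, map_zero, smul_zero]
  have hexpand : ∀ y, f (x + s • y) - f x = s • fderiv ℝ f x y
      + (s ^ 2 / 2) • fderiv ℝ (fderiv ℝ f) x y y + taylorRemainderTwo f x (s • y) := by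
    intro y
    simp only [taylorRemainderTwo, map_smul, _root_.smul_apply]
    module
  simp_rw [hexpand]
  rw [integral_add (by exact hlin.add hquad) (integrable_taylorRemainderTwo_smul hf hbdd hν x s),
    integral_add hlin hquad, hlin_zero, zero_add, integral_smul]

theorem tendstoUniformly_smul_integral_increment [CompleteSpace E] [CompleteSpace F]
    [IsFiniteMeasure ν] (hf : ContDiff ℝ 2 f)
    (hbdd : Bornology.IsBounded (Set.range (fderiv ℝ (fderiv ℝ f))))
    (huc : UniformContinuous (fderiv ℝ (fderiv ℝ f))) (hν : MemLp id 3 ν)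
    (hmean : ∫ y, y ∂ν = 0) {ι : Type*} {p : Filter ι} {a s : ι → ℝ} {c : ℝ}
    (hs : Tendsto s p (𝓝 0)) (has : Tendsto (fun i => a i * s i ^ 2) p (𝓝 c)) :
    TendstoUniformly (fun i x => a i • ∫ y, (f (x + s i • y) - f x) ∂ν)
      (fun x => (c / 2) • ∫ y, fderiv ℝ (fderiv ℝ f) x y y ∂ν) p := by
  have hν₂ : MemLp id 2 ν := hν.mono_exponent (by norm_num)
  obtain ⟨K, hK⟩ := hbdd.exists_norm_le
  have hquad_le : ∀ x, ‖∫ y, fderiv ℝ (fderiv ℝ f) x y y ∂ν‖ ≤ K * ∫ y, ‖y‖ ^ 2 ∂ν := fun x =>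
    (norm_integral_bilin_self_le hν₂ _).trans (by gcongr; exact hK _ ⟨x, rfl⟩)
  have hquad := tendstoUniformly_smul_of_norm_le (has.div_const 2) hquad_le
  have hrem := tendstoUniformly_smul_integral_taylorRemainderTwo hf hbdd huc hν hs has
  convert hquad.add hrem using 1
  · ext i x
    rw [integral_increment_eq_add_integral_taylorRemainderTwo hf hbdd hν₂ hmean, smul_add,
      smul_smul, Pi.add_apply, Pi.add_apply, mul_div_assoc]
  · simp

end Averaging

section Gaussian

open scoped Matrix

variable {ι : Type*} [Fintype ι] [DecidableEq ι] {S : Matrix ι ι ℝ}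

lemma eq_multivariateGaussian_of_map_inner (hS : S.PosSemidef) {m : EuclideanSpace ℝ ι}
    {ν : Measure (EuclideanSpace ℝ ι)}
    (hν : ∀ u : EuclideanSpace ℝ ι,
      ν.map (fun z => ⟪u, z⟫) = gaussianReal ⟪u, m⟫ (u ⬝ᵥ S *ᵥ u).toNNReal) :
    ν = multivariateGaussian m S := by
  have : IsProbabilityMeasure (ν.map fun z => ⟪(0 : EuclideanSpace ℝ ι), z⟫) := by
    rw [hν]
    infer_instance
  have : IsProbabilityMeasure ν :=
    Measure.isProbabilityMeasure_of_map fun z => ⟪(0 : EuclideanSpace ℝ ι), z⟫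
  refine Measure.ext_of_charFun (funext fun u => ?_)
  have hnonneg : 0 ≤ u ⬝ᵥ S *ᵥ u := by simpa using hS.dotProduct_mulVec_nonneg (u : ι → ℝ)
  calc charFun ν u = charFun (ν.map fun z => ⟪u, z⟫) 1 := by
        rw [charFun_eq_charFunDual_toDualMap, charFunDual_eq_charFun_map_one]
        rfl
    _ = charFun (multivariateGaussian m S) u := by
        rw [hν, charFun_gaussianReal, charFun_multivariateGaussian hS, Real.coe_toNNReal _ hnonneg]
        simp

lemma map_smul_multivariateGaussian (hS : S.PosSemidef) (m : EuclideanSpace ℝ ι) (s : ℝ) :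
    (multivariateGaussian m S).map (s • ·) = multivariateGaussian (s • m) (s ^ 2 • S) := by
  refine Measure.ext_of_charFun (funext fun u => ?_)
  rw [charFun_map_smul, charFun_multivariateGaussian hS,
    charFun_multivariateGaussian (hS.smul (sq_nonneg s))]
  congr 1
  simp only [inner_smul_left, inner_smul_right, Real.ringHom_apply, Complex.ofReal_mul,
    Complex.ofReal_pow, WithLp.ofLp_smul, Matrix.smul_mulVec, Matrix.mulVec_smul, dotProduct_smul,
    smul_dotProduct, smul_eq_mul]
  ring

lemma memLp_eval_multivariateGaussian (m : EuclideanSpace ℝ ι) (p : ι) :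
    MemLp (fun y : EuclideanSpace ℝ ι => y p) 2 (multivariateGaussian m S) :=
  IsGaussian.memLp_dual _ (EuclideanSpace.proj p) 2 (by simp)

lemma integral_eval_multivariateGaussian (m : EuclideanSpace ℝ ι) (p : ι) :
    ∫ y : EuclideanSpace ℝ ι, y p ∂(multivariateGaussian m S) = m p := by
  simpa using IsGaussian.integral_dual (μ := multivariateGaussian m S)
    (EuclideanSpace.proj (𝕜 := ℝ) p)

lemma integral_eval_mul_eval_multivariateGaussian (hS : S.PosSemidef) (m : EuclideanSpace ℝ ι)
    (p q : ι) :
    ∫ y : EuclideanSpace ℝ ι, y p * y q ∂(multivariateGaussian m S) = S p q + m p * m q := by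
  rw [← covariance_eval_multivariateGaussian (μ := m) hS p q,
    covariance_eq_sub (memLp_eval_multivariateGaussian m p) (memLp_eval_multivariateGaussian m q),
    integral_eval_multivariateGaussian, integral_eval_multivariateGaussian, sub_add_cancel]
  rfl

variable {F : Type*} [NormedAddCommGroup F] [NormedSpace ℝ F]

lemma bilin_self_eq_sum_single (B : EuclideanSpace ℝ ι →L[ℝ] EuclideanSpace ℝ ι →L[ℝ] F)
    (y : EuclideanSpace ℝ ι) :
    B y y = ∑ p, ∑ q,
      (y p * y q) • B (EuclideanSpace.single p 1) (EuclideanSpace.single q 1) := by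
  conv_lhs => rw [← (EuclideanSpace.basisFun ι ℝ).sum_repr y]
  rw [Finset.sum_comm]
  simp [Finset.smul_sum, smul_smul, mul_comm]

lemma integral_bilin_self_multivariateGaussian [CompleteSpace F] (hS : S.PosSemidef)
    (m : EuclideanSpace ℝ ι) (B : EuclideanSpace ℝ ι →L[ℝ] EuclideanSpace ℝ ι →L[ℝ] F) :
    ∫ y, B y y ∂(multivariateGaussian m S) =
      ∑ p, ∑ q, S p q • B (EuclideanSpace.single p 1) (EuclideanSpace.single q 1) + B m m := by
  have hint : ∀ p q, Integrable (fun y : EuclideanSpace ℝ ι =>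
      (y p * y q) • B (EuclideanSpace.single p 1) (EuclideanSpace.single q 1))
      (multivariateGaussian m S) := fun p q =>
    ((memLp_eval_multivariateGaussian m p).integrable_mul
      (memLp_eval_multivariateGaussian m q)).smul_const _
  simp_rw [bilin_self_eq_sum_single B]
  rw [integral_finsetSum _ fun p _ => integrable_finsetSum _ fun q _ => hint p q]
  simp_rw [integral_finsetSum _ fun q _ => hint _ q, integral_smul_const,
    integral_eval_mul_eval_multivariateGaussian hS, add_smul, Finset.sum_add_distrib]

theorem tendstoUniformly_smul_integral_increment_multivariateGaussian [CompleteSpace F]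
    (hS : S.PosSemidef) {f : EuclideanSpace ℝ ι → F} (hf : ContDiff ℝ 2 f)
    (hbdd : Bornology.IsBounded (Set.range (fderiv ℝ (fderiv ℝ f))))
    (huc : UniformContinuous (fderiv ℝ (fderiv ℝ f))) {κ : Type*} {p : Filter κ}
    {a s : κ → ℝ} {c : ℝ} (hs : Tendsto s p (𝓝 0))
    (has : Tendsto (fun i => a i * s i ^ 2) p (𝓝 c)) :
    TendstoUniformly
      (fun i x => a i • ∫ z, (f (x + z) - f x) ∂(multivariateGaussian 0 (s i ^ 2 • S)))
      (fun x => (c / 2) • ∑ p, ∑ q, S p q •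
        fderiv ℝ (fderiv ℝ f) x (EuclideanSpace.single p 1) (EuclideanSpace.single q 1)) p := by
  convert tendstoUniformly_smul_integral_increment hf hbdd huc
    (IsGaussian.memLp_id (multivariateGaussian 0 S) 3 (by simp)) integral_id_multivariateGaussian
    hs has using 4 with i x x
  · have hincr : Continuous fun z => f (x + z) - f x := by fun_prop
    have hscale := map_smul_multivariateGaussian hS 0 (s i)
    rw [smul_zero] at hscale
    rw [← hscale, integral_map (by fun_prop) hincr.aestronglyMeasurable]
  · simp [integral_bilin_self_multivariateGaussian hS]

end Gaussian

lemma tendsto_div_sqrt_natCast_sub_one (l : ℝ) :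
    Tendsto (fun d : ℕ => l / √((d : ℝ) - 1)) atTop (𝓝 0) :=
  (Real.tendsto_sqrt_atTop.comp
    (tendsto_atTop_add_const_right atTop (-1) tendsto_natCast_atTop_atTop)).const_div_atTop l

lemma tendsto_mul_natCast_mul_div_sqrt_sq (κ l : ℝ) :
    Tendsto (fun d : ℕ => κ * d * (l / √((d : ℝ) - 1)) ^ 2) atTop (𝓝 (κ * l ^ 2)) := by
  have hratio : Tendsto (fun d : ℕ => (d : ℝ) / (d + (-1))) atTop (𝓝 1) :=
    tendsto_natCast_div_add_atTop (-1)
  have hlim := hratio.const_mul (κ * l ^ 2)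
  rw [mul_one] at hlim
  refine hlim.congr' ?_
  filter_upwards [eventually_ge_atTop 1] with d hd
  have hd' : (1 : ℝ) ≤ d := mod_cast hd
  rw [div_pow, Real.sq_sqrt (by linarith), ← sub_eq_add_neg]
  ring

theorem generator_second_order_term_uniform_limit_general {ι : Type*} [Fintype ι] [DecidableEq ι]
    {C : Matrix ι ι ℝ} (hC : C.PosSemidef) (κ l : ℝ) {h : EuclideanSpace ℝ ι → ℝ}
    (hh : ContDiff ℝ 2 h) (hbdd : Bornology.IsBounded (Set.range (fderiv ℝ (fderiv ℝ h))))
    (huc : UniformContinuous (fderiv ℝ (fderiv ℝ h)))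
    {μ : ℕ → Measure (EuclideanSpace ℝ ι)}
    (hμ : ∀ d : ℕ, 2 ≤ d → ∀ u : EuclideanSpace ℝ ι,
      Measure.map (fun z => ⟪u, z⟫) (μ d) = gaussianReal 0
        (Real.toNNReal (l ^ 2 * (∑ p, ∑ q, u p * C p q * u q) / ((d : ℝ) - 1)))) :
    Tendsto (fun d : ℕ => ⨆ x : EuclideanSpace ℝ ι,
        |κ * d * (∫ z, (h (x + z) - h x) ∂(μ d))
          - κ * l ^ 2 / 2 * ∑ p, ∑ q, C p q *
              fderiv ℝ (fun y => fderiv ℝ h y (EuclideanSpace.single q 1)) x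
                (EuclideanSpace.single p 1)|)
      atTop (𝓝 0) := by
  have hlaw : ∀ d : ℕ, 2 ≤ d →
      μ d = multivariateGaussian 0 ((l / √((d : ℝ) - 1)) ^ 2 • C) := by
    intro d hd
    have hd' : (2 : ℝ) ≤ d := mod_cast hd
    refine eq_multivariateGaussian_of_map_inner (hC.smul (sq_nonneg _)) fun u => ?_
    rw [hμ d hd u, inner_zero_right, div_pow, Real.sq_sqrt (by linarith), mul_div_right_comm]
    simp only [dotProduct, Matrix.mulVec, Matrix.smul_apply, smul_eq_mul, Finset.mul_sum]
    simp only [mul_assoc, mul_left_comm]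
  have hlim := tendsto_iSup_dist_of_tendstoUniformly
    (tendstoUniformly_smul_integral_increment_multivariateGaussian hC hh hbdd huc
      (tendsto_div_sqrt_natCast_sub_one l) (tendsto_mul_natCast_mul_div_sqrt_sq κ l))
  refine hlim.congr' ?_
  filter_upwards [eventually_ge_atTop 2] with d hd
  simp only [hlaw d hd, Real.dist_eq, smul_eq_mul, fderiv_fderiv_apply_const hh]

/-- For `C = I_r ⊗ Λ` with `Λ` symmetric positive definite, `l > 0`, and `h : ℝ^{rk} → ℝ`
smooth with compact support, if `Z_d ~ N(0, l²C/(d-1))` then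
`sup_x | k d E[h(x+Z_d) - h(x)] - (k l²/2) Tr(C ∇²h(x)) | → 0` as `d → ∞`. -/
theorem generator_second_order_term_uniform_limit
    {r k : ℕ} (hr : 1 ≤ r) (hk : 1 ≤ k)
    (Λ : Matrix (Fin k) (Fin k) ℝ) (hsym : Λ.IsSymm) (hpd : Λ.PosDef)
    (l : ℝ) (hl : 0 < l)
    (C : Matrix (Fin r × Fin k) (Fin r × Fin k) ℝ)
    (hC : C = (1 : Matrix (Fin r) (Fin r) ℝ) ⊗ₖ Λ)
    (h : EuclideanSpace ℝ (Fin r × Fin k) → ℝ)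
    (hsmooth : ContDiff ℝ (⊤ : ℕ∞) h) (hsupp : HasCompactSupport h)
    (μ : ℕ → Measure (EuclideanSpace ℝ (Fin r × Fin k)))
    (hprob : ∀ d, IsProbabilityMeasure (μ d))
    (hμ : ∀ d : ℕ, 2 ≤ d → ∀ u : EuclideanSpace ℝ (Fin r × Fin k),
      Measure.map (fun z => ⟪u, z⟫) (μ d)
        = gaussianReal 0
            (Real.toNNReal (l ^ 2 * (∑ p, ∑ q, u p * C p q * u q) / ((d : ℝ) - 1)))) :
    Tendsto (fun d : ℕ => ⨆ x : EuclideanSpace ℝ (Fin r × Fin k),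
        |(k : ℝ) * d * (∫ z, (h (x + z) - h x) ∂(μ d))
          - k * l ^ 2 / 2 * ∑ p, ∑ q, C p q *
              fderiv ℝ (fun y => fderiv ℝ h y (EuclideanSpace.single q 1)) x
                (EuclideanSpace.single p 1)|)
      atTop (nhds 0) := by
  have hC_posSemidef : C.PosSemidef := hC ▸ Matrix.PosSemidef.one.kronecker hpd.posSemidef
  have hh : ContDiff ℝ 2 h := contDiff_infty.mp hsmooth 2
  have hsupp₂ : HasCompactSupport (fderiv ℝ (fderiv ℝ h)) := (hsupp.fderiv ℝ).fderiv ℝ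
  have hcont₂ : Continuous (fderiv ℝ (fderiv ℝ h)) :=
    (hh.fderiv_right (m := 1) (by norm_num)).continuous_fderiv (by simp)
  exact generator_second_order_term_uniform_limit_general hC_posSemidef k l hh
    (hsupp₂.isCompact_range hcont₂).isBounded (hsupp₂.uniformContinuous_of_continuous hcont₂) hμ
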